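/- The only triples (φ₁, φ₂, φ₃) of rational numbers in [0,1) with cos(2πφ₁) + cos(2πφ₂) + cos(2πφ₃) = 0 and no proper sub-sum vanishing, up to permutations, the transformations φ_j → 1−φ_j, and simultaneous replacement φ_j → 1/2−φ_j, are (1/10, 3/10, 1/3) and the family (φ, φ+1/3, φ−1/3 mod 1) for φ ∈ Q. -/

import Mathlib

open Real

/-!
The proof uses Galois conjugation in a cyclotomic field. Let `N` be the least common denominator of
the three angles, `φⱼ = nⱼ / N`, and `ζ = exp (2πi / N)`. Since the cyclotomic polynomial is
irreducible, `∑ⱼ (ζ ^ (k nⱼ) + ζ ^ (-k nⱼ)) = 0` for every `k` prime to `N` (`symSum_conj`).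

Write `N = q m` and use only `k = 1 + s m` with `0 ≤ s < q`. Passing from `1` to `1 + s m` multiplies
`ζ ^ a` by the `a s`-th power of a primitive `q`-th root of unity, so Fourier inversion over `ℤ/q`
isolates the sum `S c` of those of the six terms whose exponent is `c` modulo `q`
(`classSum_eq`).

* If every `1 + s m` is prime to `N`, then all `S c` vanish. This happens for `q = p` an odd prime
  with `p² ∣ N`, and for `q = 4` when `8 ∣ N`. A class with `c ≡ -c` gives a vanishing subsum of the
  cosines, hence is empty, because it cannot contain all three terms by minimality of `N`. Any other
  class meets each pair `ζ ^ nⱼ, ζ ^ (-nⱼ)` at most once; comparing real parts, the class of `n₀`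
  must contain one element of each pair. Three unit complex numbers with zero sum form an
  equilateral triangle, which is the one-parameter family.
* If `q = p ≥ 5` divides `N` exactly once, one value of `s` has to be left out, and the conclusion
  becomes `S c = u ^ c * K` for constants `K` and `‖u‖ = 1`. If `K = 0`, the previous argument
  applies. Otherwise all `p` classes are occupied by the three pairs, so that `p = 5` and the
  classes are `0, ±1, ±2`; solving for the cosines gives `1/10, 3/10, 1/3`
  (`isListedTriple_of_mod_five`).
* If neither case occurs, then `N ∣ 12`, and the cosines lie in `{±1, ±1/2, ±√3/2}`.
-/

/-! ### The list of solutions -/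

/-- The triple of cosine values `x` is, up to order and a common sign `ε`, the exceptional triple
or a member of the one-parameter family. -/
def IsListedTriple (x : Fin 3 → ℝ) : Prop :=
  ∃ ε : ℝ, (ε = 1 ∨ ε = -1) ∧
    ((({ε * x 0, ε * x 1, ε * x 2} : Multiset ℝ)
        = ({Real.cos (2 * π * (1 / 10 : ℝ)), Real.cos (2 * π * (3 / 10 : ℝ)),
            Real.cos (2 * π * (1 / 3 : ℝ))} : Multiset ℝ)) ∨
      ∃ φ : ℚ,
        (({ε * x 0, ε * x 1, ε * x 2} : Multiset ℝ)
          = ({Real.cos (2 * π * (φ : ℝ)), Real.cos (2 * π * ((φ : ℝ) + 1 / 3)),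
              Real.cos (2 * π * ((φ : ℝ) - 1 / 3))} : Multiset ℝ)))

/-- The multiset of the three values of `y` does not depend on their order. -/
theorem triple_comp_perm (y : Fin 3 → ℝ) (σ : Equiv.Perm (Fin 3)) :
    ({y (σ 0), y (σ 1), y (σ 2)} : Multiset ℝ) = {y 0, y 1, y 2} := by
  have h : ∀ w : Fin 3 → ℝ, ({w 0, w 1, w 2} : Multiset ℝ) = Finset.univ.val.map w := by
    intro w; rfl
  rw [h y, h (fun j => y (σ j))]
  have := Multiset.map_univ_val_equiv σ
  conv_rhs => rw [← this, Multiset.map_map]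
  rfl

theorem IsListedTriple.of_perm {x : Fin 3 → ℝ} (σ : Equiv.Perm (Fin 3))
    (h : IsListedTriple (fun j => x (σ j))) : IsListedTriple x := by
  obtain ⟨ε, hε, h⟩ := h
  have := triple_comp_perm (fun j => ε * x j) σ
  simp only at this h
  rw [this] at h
  exact ⟨ε, hε, h⟩

/-! ### Galois conjugation and Fourier inversion -/

/-- The symmetric sum `∑ⱼ (ζ ^ (k nⱼ) + ζ ^ (-k nⱼ))`; for `ζ = exp (2πi / N)` it is
`2 ∑ⱼ cos (2π k nⱼ / N)`. -/
noncomputable def symSum (ζ : ℂ) (n : Fin 3 → ℤ) (k : ℤ) : ℂ :=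
  ∑ j, (ζ ^ (k * n j) + ζ ^ (-(k * n j)))

open Classical in
/-- The part of `symSum ζ n 1` consisting of the terms `ζ ^ a` with `a ≡ c` modulo `q`. If both
`n j` and `-n j` are congruent to `c`, both terms are counted. -/
noncomputable def classSum (ζ : ℂ) (n : Fin 3 → ℤ) (q : ℕ) (c : ℤ) : ℂ :=
  ∑ j, ((if (q : ℤ) ∣ n j - c then ζ ^ (n j) else 0)
    + (if (q : ℤ) ∣ -n j - c then ζ ^ (-n j) else 0))

/-- Galois conjugation: `ζ ↦ ζ ^ k` preserves vanishing, the cyclotomic polynomial being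
irreducible. -/
theorem symSum_conj {ζ : ℂ} {N : ℕ} (hN : 0 < N) (hζ : IsPrimitiveRoot ζ N) (n : Fin 3 → ℤ)
    (h : symSum ζ n 1 = 0) (k : ℕ) (hk : k.Coprime N) : symSum ζ n k = 0 := by
  have hex : ∀ a : ℤ, ∃ b : ℕ, ζ ^ a = ζ ^ b := by
    intro a
    have hN' : (N : ℤ) ≠ 0 := by exact_mod_cast hN.ne'
    refine ⟨(a % N).toNat, ?_⟩
    rw [← zpow_natCast ζ (a % N).toNat, Int.toNat_of_nonneg (Int.emod_nonneg a hN')]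
    conv_lhs => rw [← Int.emod_add_mul_ediv a N]
    rw [zpow_add₀ (hζ.ne_zero hN.ne'), zpow_mul, zpow_natCast ζ N, hζ.pow_eq_one, one_zpow,
      mul_one]
  -- Exponents are made nonnegative so that the sum becomes a polynomial in `ζ`.
  choose f hf using hex
  let P : Polynomial ℚ := ∑ j, (Polynomial.X ^ (f (n j)) + Polynomial.X ^ (f (-n j)))
  have hP : Polynomial.aeval ζ P = 0 := by
    simpa [P, symSum, ← hf] using h
  have hdvd : Polynomial.cyclotomic N ℚ ∣ P := by
    rw [Polynomial.cyclotomic_eq_minpoly_rat hζ hN]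
    exact minpoly.dvd ℚ ζ hP
  have hk' : IsPrimitiveRoot (ζ ^ k) N := hζ.pow_of_coprime k hk
  have h2 : Polynomial.aeval (ζ ^ k) P = 0 := by
    rw [Polynomial.cyclotomic_eq_minpoly_rat hk' hN] at hdvd
    exact (minpoly.dvd_iff).1 hdvd
  have h3 : ∀ a : ℤ, ζ ^ ((k : ℤ) * a) = (ζ ^ k) ^ f a := by
    intro a
    rw [mul_comm, zpow_mul, hf, zpow_natCast, ← pow_mul, ← pow_mul, mul_comm]
  simp only [symSum, ← mul_neg, h3]
  simpa [P] using h2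

open Classical in
/-- Orthogonality of the additive characters modulo `q`, applied to one term `ζ ^ a`. -/
theorem sum_conj_term {ζ : ℂ} {N q m : ℕ} (hN : 0 < N) (hζ : IsPrimitiveRoot ζ N)
    (hqm : N = q * m) (a c : ℤ) :
    ∑ s ∈ Finset.range q, ζ ^ (-(c * s * m)) * ζ ^ ((1 + s * m) * a)
      = if (q : ℤ) ∣ a - c then q * ζ ^ a else 0 := by
  have h0 := hζ.ne_zero hN.ne'
  have hm : (m : ℤ) ≠ 0 := by
    rintro h; simp at h; simp [h] at hqm; omega
  have e : ∀ s : ℕ, ζ ^ (-(c * s * m)) * ζ ^ ((1 + s * m) * a)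
      = ζ ^ a * (ζ ^ (m * (a - c))) ^ s := by
    intro s
    rw [← zpow_natCast (ζ ^ _) s, ← zpow_mul, ← zpow_add₀ h0, ← zpow_add₀ h0]
    congr 1; ring
  simp only [e, ← Finset.mul_sum]
  split_ifs with hd
  · have : ζ ^ ((m : ℤ) * (a - c)) = 1 := by
      rw [hζ.zpow_eq_one_iff_dvd, hqm, Nat.cast_mul, mul_comm]
      exact mul_dvd_mul_left _ hd
    simp only [this, one_pow, Finset.sum_const, Finset.card_range, nsmul_eq_mul, mul_one]
    ring
  · have h1 : ζ ^ ((m : ℤ) * (a - c)) ≠ 1 := by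
      rw [Ne, hζ.zpow_eq_one_iff_dvd, hqm, Nat.cast_mul, mul_comm]
      intro h
      exact hd ((mul_dvd_mul_iff_left hm).1 h)
    have h2 : (ζ ^ ((m : ℤ) * (a - c))) ^ q = 1 := by
      rw [← zpow_natCast (ζ ^ _) q, ← zpow_mul, hζ.zpow_eq_one_iff_dvd, hqm]
      exact ⟨a - c, by push_cast; ring⟩
    rw [geom_sum_eq h1, h2]; simp

/-- Fourier inversion: if all the sums at `1 + s m` vanish except possibly the one at `s₀`, the
class sums modulo `q` are proportional to a character. -/
theorem classSum_eq {ζ : ℂ} {N q m : ℕ} (hN : 0 < N) (hζ : IsPrimitiveRoot ζ N)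
    (hqm : N = q * m) (n : Fin 3 → ℤ) (s₀ : ℕ) (hs₀ : s₀ < q)
    (h : ∀ s < q, s ≠ s₀ → symSum ζ n (1 + s * m) = 0) (c : ℤ) :
    q * classSum ζ n q c = ζ ^ (-(c * s₀ * m)) * symSum ζ n (1 + s₀ * m) := by
  have h1 : ∑ s ∈ Finset.range q, ζ ^ (-(c * s * m)) * symSum ζ n (1 + s * m)
      = ζ ^ (-(c * s₀ * m)) * symSum ζ n (1 + s₀ * m) := by
    refine Finset.sum_eq_single s₀ ?_ ?_
    · intro s hs hne
      rw [h s (Finset.mem_range.1 hs) hne, mul_zero]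
    · intro hs; exact absurd (Finset.mem_range.2 hs₀) hs
  rw [← h1]
  simp only [symSum, classSum, Finset.mul_sum]
  rw [Finset.sum_comm]
  refine Finset.sum_congr rfl fun j _ => ?_
  have hneg : ∀ s : ℕ, -((1 + (s : ℤ) * m) * n j) = (1 + s * m) * -n j := fun s => by ring
  simp only [hneg, mul_add, Finset.sum_add_distrib]
  rw [sum_conj_term hN hζ hqm, sum_conj_term hN hζ hqm]
  simp only [mul_ite, mul_zero]

/-! ### Consequences of the class sums -/

theorem cos_two_pi_div_three : Real.cos (2 * π / 3) = -1 / 2 := by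
  rw [show 2 * π / 3 = π - π / 3 by ring, Real.cos_pi_sub, Real.cos_pi_div_three]; norm_num

theorem sin_two_pi_div_three : Real.sin (2 * π / 3) = √3 / 2 := by
  rw [show 2 * π / 3 = π - π / 3 by ring, Real.sin_pi_sub, Real.sin_pi_div_three]

/-- Three unit complex numbers with zero sum form an equilateral triangle, so that their real parts
are a member of the one-parameter family. -/
theorem isListedTriple_of_unit_sum (φ : ℚ) (x : Fin 3 → ℝ) (w₀ w₁ w₂ : ℂ)
    (hw₀ : w₀ = Complex.exp ((2 * π * φ : ℝ) * Complex.I))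
    (hn₁ : ‖w₁‖ = 1) (hn₂ : ‖w₂‖ = 1) (hx₀ : w₀.re = x 0) (hx₁ : w₁.re = x 1) (hx₂ : w₂.re = x 2)
    (h : w₀ + w₁ + w₂ = 0) : IsListedTriple x := by
  have hre : x 0 = Real.cos (2 * π * φ) := by rw [← hx₀, hw₀, Complex.exp_ofReal_mul_I_re]
  have him : w₀.im = Real.sin (2 * π * φ) := by rw [hw₀, Complex.exp_ofReal_mul_I_im]
  have hcs := Real.sin_sq_add_cos_sq (2 * π * φ)
  rw [← hre, ← him] at hcs
  have q1 : x 1 ^ 2 + w₁.im ^ 2 = 1 := by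
    have := Complex.sq_norm w₁
    rw [hn₁, Complex.normSq_apply, hx₁] at this; linarith
  have q2 : x 2 ^ 2 + w₂.im ^ 2 = 1 := by
    have := Complex.sq_norm w₂
    rw [hn₂, Complex.normSq_apply, hx₂] at this; linarith
  have r := congrArg Complex.re h
  have i := congrArg Complex.im h
  simp only [Complex.add_re, Complex.add_im, Complex.zero_re, Complex.zero_im, hx₀, hx₁, hx₂]
    at r i
  have r2 : x 2 = -x 0 - x 1 := by linarith
  have i2 : w₂.im = -w₀.im - w₁.im := by linarith
  rw [r2, i2] at q2
  have hin : x 0 * x 1 + w₀.im * w₁.im = -1 / 2 := by linarith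
  have hc1 : Real.cos (2 * π * ((φ : ℝ) + 1 / 3)) = -x 0 / 2 - √3 / 2 * w₀.im := by
    rw [show 2 * π * ((φ : ℝ) + 1 / 3) = 2 * π * φ + 2 * π / 3 by ring, Real.cos_add,
      cos_two_pi_div_three, sin_two_pi_div_three, ← hre, ← him]; ring
  have hc2 : Real.cos (2 * π * ((φ : ℝ) - 1 / 3)) = -x 0 / 2 + √3 / 2 * w₀.im := by
    rw [show 2 * π * ((φ : ℝ) - 1 / 3) = 2 * π * φ - 2 * π / 3 by ring, Real.cos_sub,
      cos_two_pi_div_three, sin_two_pi_div_three, ← hre, ← him]; ring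
  -- The cross product of the first two vectors; its square is `1 - (1/2)²`.
  obtain ⟨d, hd⟩ : ∃ d, d = x 0 * w₁.im - w₀.im * x 1 := ⟨_, rfl⟩
  have hd2 : d ^ 2 = 3 / 4 := by
    have : d ^ 2 + (x 0 * x 1 + w₀.im * w₁.im) ^ 2
        = (w₀.im ^ 2 + x 0 ^ 2) * (x 1 ^ 2 + w₁.im ^ 2) := by rw [hd]; ring
    rw [hin, hcs, q1] at this; linarith
  have h3 : √3 ^ 2 = 3 := Real.sq_sqrt (by norm_num)
  have hx1 : x 1 = -x 0 / 2 - d * w₀.im := by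
    have : x 1 * (w₀.im ^ 2 + x 0 ^ 2) = x 0 * (x 0 * x 1 + w₀.im * w₁.im) - d * w₀.im := by
      rw [hd]; ring
    rw [hcs, hin] at this; linarith
  refine ⟨1, Or.inl rfl, Or.inr ⟨φ, ?_⟩⟩
  simp only [one_mul]
  rw [hc1, hc2, ← hre, r2, hx1]
  have : (d - √3 / 2) * (d + √3 / 2) = 0 := by linarith
  rcases mul_eq_zero.1 this with h | h
  · have : d = √3 / 2 := by linarith
    rw [this]; congr 3; ring
  · have : d = -(√3 / 2) := by linarith
    have hperm : ∀ a b c : ℝ, ({a, c, b} : Multiset ℝ) = {a, b, c} := by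
      intro a b c
      exact triple_comp_perm ![a, b, c] (Equiv.swap 1 2)
    rw [this, ← hperm]
    congr 2
    · ring
    · congr 1; ring

open Classical in
/-- If `q ∤ 2c`, then at most one of `a` and `-a` is congruent to `c`, so the contribution of the
pair `z ^ a, z ^ (-a)` to the class sum is zero or a unit complex number with real part `y`. -/
theorem class_term {z : ℂ} {a c : ℤ} {q : ℕ} {y : ℝ} (hz : ‖z ^ a‖ = 1) (hz' : ‖z ^ (-a)‖ = 1)
    (hy : (z ^ a).re = y) (hy' : (z ^ (-a)).re = y) (hc : ¬ (q : ℤ) ∣ 2 * c) :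
    let t := (if (q : ℤ) ∣ a - c then z ^ a else 0) + (if (q : ℤ) ∣ -a - c then z ^ (-a) else 0)
    (t = 0 ∧ ¬ (q : ℤ) ∣ a - c ∧ ¬ (q : ℤ) ∣ -a - c) ∨ (‖t‖ = 1 ∧ t.re = y) := by
  intro t
  by_cases h1 : (q : ℤ) ∣ a - c <;> by_cases h2 : (q : ℤ) ∣ -a - c
  · refine absurd ?_ hc
    have := dvd_add h1 h2
    rw [show a - c + (-a - c) = -(2 * c) by ring] at this
    exact (dvd_neg).1 this
  · right; simp [t, h1, h2, hz, hy, -zpow_neg]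
  · right; simp [t, h1, h2, hz', hy', -zpow_neg]
  · left; simp [t, h1, h2]

/-- If the class of `n 0` modulo `q` is not its own negative and has vanishing class sum, then it
contains one term of each of the three pairs, and these form an equilateral triangle. -/
theorem isListedTriple_of_classSum_eq_zero {ζ : ℂ} {n : Fin 3 → ℤ} {q : ℕ} {x : Fin 3 → ℝ} (φ : ℚ)
    (hexp : ζ ^ (n 0) = Complex.exp ((2 * π * φ : ℝ) * Complex.I))
    (hn : ∀ a : ℤ, ‖ζ ^ a‖ = 1) (hre : ∀ j, (ζ ^ (n j)).re = x j)
    (hre' : ∀ j, (ζ ^ (-n j)).re = x j) (hx : ∀ j, x j ≠ 0) (hsum : x 0 + x 1 + x 2 = 0)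
    (hq : ¬ (q : ℤ) ∣ 2 * n 0) (hS : classSum ζ n q (n 0) = 0) : IsListedTriple x := by
  classical
  have h2 : ¬ (q : ℤ) ∣ -n 0 - n 0 := by
    intro h; apply hq; rw [← dvd_neg, show -(2 * n 0) = -n 0 - n 0 by ring]; exact h
  rw [classSum, Fin.sum_univ_three] at hS
  simp only [sub_self, dvd_zero, if_true, h2, if_false, add_zero] at hS
  have t1 := class_term (hn (n 1)) (hn _) (hre 1) (hre' 1) hq
  have t2 := class_term (hn (n 2)) (hn _) (hre 2) (hre' 2) hq
  dsimp only at t1 t2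
  generalize ((if (q : ℤ) ∣ n 1 - n 0 then ζ ^ n 1 else 0)
    + if (q : ℤ) ∣ -n 1 - n 0 then ζ ^ (-n 1) else 0) = w₁ at *
  generalize ((if (q : ℤ) ∣ n 2 - n 0 then ζ ^ n 2 else 0)
    + if (q : ℤ) ∣ -n 2 - n 0 then ζ ^ (-n 2) else 0) = w₂ at *
  have hr := congrArg Complex.re hS
  simp only [Complex.add_re, Complex.zero_re, hre] at hr
  rcases t1 with ⟨t1, -⟩ | ⟨n1, r1⟩ <;> rcases t2 with ⟨t2, -⟩ | ⟨n2, r2⟩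
  · simp only [t1, t2, Complex.zero_re] at hr
    exact absurd (by linarith) (hx 0)
  · simp only [t1, r2, Complex.zero_re] at hr
    exact absurd (by linarith) (hx 1)
  · simp only [t2, r1, Complex.zero_re] at hr
    exact absurd (by linarith) (hx 2)
  · exact isListedTriple_of_unit_sum φ x _ w₁ w₂ hexp n1 n2 (hre 0) r1 r2 hS

/-- A vanishing class sum over a class that is its own negative is a vanishing subsum of the
cosines; by irreducibility it is empty or full. -/
theorem self_neg_class {ζ : ℂ} {n : Fin 3 → ℤ} {q : ℕ} {x : Fin 3 → ℝ}
    (hre : ∀ j, (ζ ^ (n j)).re = x j)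
    (hre' : ∀ j, (ζ ^ (-n j)).re = x j) (hx : ∀ j, x j ≠ 0) (hsum : x 0 + x 1 + x 2 = 0) (c : ℤ)
    (hq : (q : ℤ) ∣ 2 * c) (hS : classSum ζ n q c = 0) :
    (∀ j, (q : ℤ) ∣ n j - c) ∨ (∀ j, ¬ (q : ℤ) ∣ n j - c) := by
  classical
  have hiff : ∀ j, (q : ℤ) ∣ -n j - c ↔ (q : ℤ) ∣ n j - c := by
    intro j
    rw [show -n j - c = -(n j - c) - 2 * c by ring, dvd_sub_left hq, dvd_neg]
  have hr := congrArg Complex.re hS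
  rw [classSum, Fin.sum_univ_three] at hr
  simp only [hiff, Complex.add_re, Complex.zero_re, apply_ite Complex.re, hre, hre'] at hr
  have := hx 0
  have := hx 1
  have := hx 2
  rw [Fin.forall_fin_succ, Fin.forall_fin_two, Fin.forall_fin_succ, Fin.forall_fin_two]
  simp only [Fin.succ_zero_eq_one, Fin.succ_one_eq_two]
  split_ifs at hr with a b c c b c c
  · tauto
  · exact absurd (by linarith) (hx 2)
  · exact absurd (by linarith) (hx 1)
  · exact absurd (by linarith) (hx 0)
  · exact absurd (by linarith) (hx 0)
  · exact absurd (by linarith) (hx 1)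
  · exact absurd (by linarith) (hx 2)
  · tauto

/-- Suppose the three pairs `±nⱼ` occupy the classes `0`, `±1`, `±2` modulo `5`, and the class sums
are `K, u K, u² K` for the classes `0, 1, 2`. Then `K = 2 x₀` is real and `u`, `u²` are unit complex
numbers, so `2 x₀ = ±1`, `x₁ = K re u`, `x₂ = K (2 (re u)² - 1)`, and the vanishing of the sum is a
quadratic equation for `re u`; its two roots give the exceptional triple in two orders. -/
theorem isListedTriple_of_mod_five {ζ : ℂ} {n : Fin 3 → ℤ} {x : Fin 3 → ℝ}
    (hn : ∀ a : ℤ, ‖ζ ^ a‖ = 1) (hre : ∀ j, (ζ ^ (n j)).re = x j)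
    (hre' : ∀ j, (ζ ^ (-n j)).re = x j) (hsum : x 0 + x 1 + x 2 = 0)
    (h0 : (5 : ℤ) ∣ n 0 ∨ (5 : ℤ) ∣ -n 0)
    (h1 : (5 : ℤ) ∣ n 1 - 1 ∨ (5 : ℤ) ∣ -n 1 - 1)
    (h2 : (5 : ℤ) ∣ n 2 - 2 ∨ (5 : ℤ) ∣ -n 2 - 2)
    (K u : ℂ) (hu : ‖u‖ = 1)
    (hS : ∀ c : ℕ, classSum ζ n 5 c = u ^ c * K) : IsListedTriple x := by
  classical
  have s0 := hS 0
  have s1 := hS 1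
  have s2 := hS 2
  have hz : ∀ a : ℤ, ζ ^ (-a) = (starRingEnd ℂ) (ζ ^ a) := by
    intro a
    rw [zpow_neg, Complex.inv_eq_conj (hn a)]
  simp only [classSum, Fin.sum_univ_three, Nat.cast_ofNat, Nat.cast_zero, Nat.cast_one] at s0 s1 s2
  have a0 : (5 : ℤ) ∣ n 0 - 0 ∧ (5 : ℤ) ∣ -n 0 - 0 := by omega
  have a1 : ¬ (5 : ℤ) ∣ n 0 - 1 ∧ ¬ (5 : ℤ) ∣ -n 0 - 1 ∧ ¬ (5 : ℤ) ∣ n 0 - 2 ∧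
    ¬ (5 : ℤ) ∣ -n 0 - 2 := by omega
  have a2 : ¬ (5 : ℤ) ∣ n 1 - 0 ∧ ¬ (5 : ℤ) ∣ -n 1 - 0 ∧ ¬ (5 : ℤ) ∣ n 1 - 2 ∧
    ¬ (5 : ℤ) ∣ -n 1 - 2 := by omega
  have a3 : ¬ (5 : ℤ) ∣ n 2 - 0 ∧ ¬ (5 : ℤ) ∣ -n 2 - 0 ∧ ¬ (5 : ℤ) ∣ n 2 - 1 ∧
    ¬ (5 : ℤ) ∣ -n 2 - 1 := by omega
  simp only [a0, a1, a2, a3, if_true, if_false] at s0 s1 s2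
  have hK : K = (2 * x 0 : ℝ) := by
    apply Complex.ext
    · have := congrArg Complex.re s0
      simp only [Complex.add_re, hre, hre', pow_zero, one_mul, Complex.zero_re] at this
      rw [← this, Complex.ofReal_re]; ring
    · have := congrArg Complex.im s0
      simp only [Complex.add_im, hz, Complex.conj_im, pow_zero, one_mul, Complex.zero_im] at this
      rw [← this, Complex.ofReal_im]; ring
  have hq1 : ¬ ((5 : ℕ) : ℤ) ∣ 2 * 1 := by norm_num
  have hq2 : ¬ ((5 : ℕ) : ℤ) ∣ 2 * 2 := by norm_num
  have t1 := class_term (hn (n 1)) (hn _) (hre 1) (hre' 1) hq1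
  have t2 := class_term (hn (n 2)) (hn _) (hre 2) (hre' 2) hq2
  simp only [Nat.cast_ofNat] at t1 t2
  replace t1 := t1.resolve_left (by tauto)
  replace t2 := t2.resolve_left (by tauto)
  simp only [zero_add, add_zero] at s1 s2
  rw [s1, pow_one] at t1
  rw [s2] at t2
  rw [hK] at t1 t2
  have nK : (2 * x 0) ^ 2 = 1 := by
    have := t1.1
    rw [norm_mul, hu, one_mul, Complex.norm_real, Real.norm_eq_abs] at this
    rw [← sq_abs, this, one_pow]
  have nu : u.re ^ 2 + u.im ^ 2 = 1 := by
    have := Complex.sq_norm u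
    rw [hu, Complex.normSq_apply] at this; linarith
  have e1 : x 1 = 2 * x 0 * u.re := by
    rw [← t1.2, Complex.re_mul_ofReal]; ring
  have e2 : x 2 = 2 * x 0 * (2 * u.re ^ 2 - 1) := by
    rw [← t2.2, Complex.re_mul_ofReal, pow_two, Complex.mul_re]
    linear_combination (-(2 * x 0)) * nu
  have hx0 : x 0 ≠ 0 := by rintro h; simp [h] at nK
  have hquad : 4 * u.re ^ 2 + 2 * u.re - 1 = 0 := by
    apply mul_left_cancel₀ hx0
    rw [e1, e2] at hsum
    linear_combination hsum
  have c3 : Real.cos (2 * π * (1 / 3 : ℝ)) = -1 / 2 := by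
    rw [← cos_two_pi_div_three]; congr 1; ring
  have h5 : √5 ^ 2 = 5 := Real.sq_sqrt (by norm_num)
  have c1 : Real.cos (2 * π * (1 / 10 : ℝ)) = (1 + √5) / 4 := by
    rw [← Real.cos_pi_div_five]; congr 1; ring
  have c2 : Real.cos (2 * π * (3 / 10 : ℝ)) = (1 - √5) / 4 := by
    rw [show 2 * π * (3 / 10 : ℝ) = π - 2 * (π / 5) by ring, Real.cos_pi_sub, Real.cos_two_mul,
      Real.cos_pi_div_five]
    linear_combination (-1 / 8) * h5
  have d0 : -(2 * x 0) * x 0 = -1 / 2 := by linear_combination (-1 / 2) * nK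
  have d1 : -(2 * x 0) * x 1 = -u.re := by rw [e1]; linear_combination (-u.re) * nK
  have d2 : -(2 * x 0) * x 2 = 1 / 2 + u.re := by
    rw [e2]; linear_combination (-(2 * u.re ^ 2 - 1)) * nK - hquad / 2
  refine ⟨-(2 * x 0), ?_, Or.inl ?_⟩
  · rcases mul_self_eq_one_iff.1 ((pow_two _).symm.trans nK) with h | h
    · right; rw [h]
    · left; rw [h]; norm_num
  rw [d0, d1, d2, c1, c2, c3]
  have : (u.re - (-1 + √5) / 4) * (u.re - (-1 - √5) / 4) = 0 := by
    linear_combination hquad / 4 - h5 / 16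
  have hperm : ∀ a b c : ℝ, ({c, b, a} : Multiset ℝ) = {a, b, c} := by
    intro a b c
    exact triple_comp_perm ![a, b, c] (Equiv.swap 0 2)
  have hperm' : ∀ a b c : ℝ, ({c, a, b} : Multiset ℝ) = {a, b, c} := by
    intro a b c
    exact triple_comp_perm ![a, b, c] (finRotate 3).symm
  rcases mul_eq_zero.1 this with h | h
  · have : u.re = (-1 + √5) / 4 := by linarith
    rw [this, ← hperm]
    congr 2 <;> [ring; (congr 1; ring)]
  · have : u.re = (-1 - √5) / 4 := by linarith
    rw [this, hperm']
    congr 2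
    · ring
    · ring

theorem symSum_one {ζ : ℂ} {n : Fin 3 → ℤ} {x : Fin 3 → ℝ} (hn : ∀ a : ℤ, ‖ζ ^ a‖ = 1)
    (hre : ∀ j, (ζ ^ (n j)).re = x j) (hsum : x 0 + x 1 + x 2 = 0) : symSum ζ n 1 = 0 := by
  have hz : ∀ j, ζ ^ (n j) + ζ ^ (-n j) = ((2 * x j : ℝ) : ℂ) := by
    intro j
    rw [zpow_neg, Complex.inv_eq_conj (hn _), Complex.add_conj, hre]
  simp only [symSum, one_mul, hz, Fin.sum_univ_three]
  rw [← Complex.ofReal_add, ← Complex.ofReal_add,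
    show 2 * x 0 + 2 * x 1 + 2 * x 2 = 0 by linarith, Complex.ofReal_zero]

/-! ### The possible common denominators -/

/-- An odd prime `p` dividing the common denominator `N = p m`: here `p ∣ m` means
`p² ∣ N`. -/
theorem isListedTriple_of_odd_prime {ζ : ℂ} {N p m : ℕ} {n : Fin 3 → ℤ} {x : Fin 3 → ℝ}
    (φ : Fin 3 → ℚ) (hN : 0 < N) (hζ : IsPrimitiveRoot ζ N)
    (hexp : ∀ j, ζ ^ (n j) = Complex.exp ((2 * π * φ j : ℝ) * Complex.I))
    (hn : ∀ a : ℤ, ‖ζ ^ a‖ = 1) (hre : ∀ j, (ζ ^ (n j)).re = x j)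
    (hre' : ∀ j, (ζ ^ (-n j)).re = x j) (hx : ∀ j, x j ≠ 0) (hsum : x 0 + x 1 + x 2 = 0)
    (hp : p.Prime) (hpm : N = p * m) (hp2 : p ≠ 2) (hcase : p ∣ m ∨ 5 ≤ p)
    (hmin : ∃ j, ¬ (p : ℤ) ∣ n j) : IsListedTriple x := by
  have h1 := symSum_one hn hre hsum
  have hpI : Prime (p : ℤ) := Nat.prime_iff_prime_int.1 hp
  have hp0 : (p : ℂ) ≠ 0 := by exact_mod_cast hp.ne_zero
  have h2 : ∀ a : ℤ, (p : ℤ) ∣ 2 * a → (p : ℤ) ∣ a := by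
    intro a ha
    refine (hpI.dvd_or_dvd ha).resolve_left fun h => hp2 ?_
    exact (Nat.prime_dvd_prime_iff_eq hp Nat.prime_two).1 (by exact_mod_cast h)
  have hconj : ∀ s : ℕ, ¬ p ∣ 1 + s * m → symSum ζ n (1 + s * m) = 0 := by
    intro s hs
    have := symSum_conj hN hζ n h1 (1 + s * m) ?_
    · exact_mod_cast this
    · rw [hpm]
      refine Nat.Coprime.mul_right ((Nat.Prime.coprime_iff_not_dvd hp).2 hs).symm ?_
      simp
  -- The class sums are `K` times a character, with `K = 0` when `p ∣ m`.
  obtain ⟨K, u, hu, hS, hK⟩ : ∃ K u : ℂ, ‖u‖ = 1 ∧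
      (∀ c : ℤ, classSum ζ n p c = u ^ c * K) ∧ (p ∣ m → K = 0) := by
    -- At most one `s < p` makes `1 + s m` divisible by `p`; it is the one left out
    -- (and `s₀ = 0` will do if there is none).
    obtain ⟨s₀, hs₀, hs⟩ : ∃ s₀ < p, ∀ s < p, s ≠ s₀ → ¬ p ∣ 1 + s * m := by
      by_cases hpd : p ∣ m
      · refine ⟨0, hp.pos, fun s _ _ h => hp.one_lt.ne' ?_⟩
        exact Nat.dvd_one.1 ((Nat.dvd_add_left (hpd.mul_left s)).1 h)
      · by_cases hex : ∃ s₀ < p, p ∣ 1 + s₀ * m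
        · obtain ⟨s₀, hs₀, hd⟩ := hex
          refine ⟨s₀, hs₀, fun s hsp hne h => hne ?_⟩
          have h3 : (p : ℤ) ∣ (s - s₀) * m := by
            have := dvd_sub (Int.natCast_dvd_natCast.2 h) (Int.natCast_dvd_natCast.2 hd)
            push_cast at this
            rw [show ((s : ℤ) - s₀) * m = 1 + s * m - (1 + s₀ * m) by ring]
            exact this
          have h4 := (hpI.dvd_or_dvd h3).resolve_right
            (fun h => hpd (Int.natCast_dvd_natCast.1 h))
          have := Int.eq_zero_of_abs_lt_dvd h4 (by rw [abs_lt]; omega)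
          omega
        · push Not at hex
          exact ⟨0, hp.pos, fun s hsp _ => hex s hsp⟩
    have hcl := classSum_eq hN hζ hpm n s₀ hs₀ fun s hsp hne => hconj s (hs s hsp hne)
    refine ⟨symSum ζ n (1 + s₀ * m) / p, ζ ^ (-(s₀ * m : ℤ)), hn _, fun c => ?_, fun hpd => ?_⟩
    · have := hcl c
      rw [← zpow_mul, show -((s₀ : ℤ) * m) * c = -(c * s₀ * m) by ring]
      field_simp
      rw [mul_comm, this]
    · rw [hconj s₀, zero_div]
      intro h
      exact hp.one_lt.ne' (Nat.dvd_one.1 ((Nat.dvd_add_left (hpd.mul_left s₀)).1 h))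
  by_cases hK0 : K = 0
  · simp only [hK0, mul_zero] at hS
    have h0 := self_neg_class hre hre' hx hsum 0 (by simp) (hS 0)
    simp only [sub_zero] at h0
    have h0 := h0.resolve_left (by push Not; exact hmin)
    exact isListedTriple_of_classSum_eq_zero (φ 0) (hexp 0) hn hre hre' hx hsum
      (fun h => h0 0 (h2 _ h)) (hS _)
  have hp5 : 5 ≤ p := hcase.resolve_left fun h => hK0 (hK h)
  have hu0 : u ≠ 0 := by rintro rfl; simp at hu
  have hocc : ∀ c : ℤ, ∃ j, (p : ℤ) ∣ n j - c ∨ (p : ℤ) ∣ -n j - c := by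
    intro c
    by_contra! h
    have := hS c
    simp only [classSum, (h _).1, (h _).2, if_false, add_zero, Finset.sum_const_zero] at this
    exact mul_ne_zero (zpow_ne_zero c hu0) hK0 this.symm
  -- Every class is occupied; classes `c` and `d` with `c ≢ ±d` are occupied by distinct pairs.
  choose f hf using hocc
  have hff : ∀ c d : ℤ, f c = f d → (p : ℤ) ∣ c - d ∨ (p : ℤ) ∣ c + d := by
    intro c d h
    have hc := hf c
    have hd := hf d
    rw [h] at hc
    rcases hc with hc | hc <;> rcases hd with hd | hd
    · left; rw [show c - d = (n (f d) - d) - (n (f d) - c) by ring]; exact dvd_sub hd hc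
    · right; rw [show c + d = -((n (f d) - c) + (-n (f d) - d)) by ring]
      exact (dvd_neg).2 (dvd_add hc hd)
    · right; rw [show c + d = -((n (f d) - d) + (-n (f d) - c)) by ring]
      exact (dvd_neg).2 (dvd_add hd hc)
    · left; rw [show c - d = (-n (f d) - d) - (-n (f d) - c) by ring]; exact dvd_sub hd hc
  have hsmall : ∀ c d : ℕ, c < d → c + d < p → f c ≠ f d := by
    intro c d hcd hlt h
    rcases hff _ _ h with h | h
    · have := Int.eq_zero_of_abs_lt_dvd h (by rw [abs_lt]; omega)
      omega
    · have := Int.eq_zero_of_abs_lt_dvd h (by rw [abs_lt]; omega)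
      omega
  have hp5' : p = 5 := by
    by_contra hne
    -- For `p ≥ 7` the four classes `0, 1, 2, 3` would need four distinct pairs.
    have hp6 : p ≠ 6 := by rintro rfl; revert hp; norm_num
    have a := hsmall 0 1 (by norm_num) (by omega)
    have b := hsmall 0 2 (by norm_num) (by omega)
    have c := hsmall 0 3 (by norm_num) (by omega)
    have d := hsmall 1 2 (by norm_num) (by omega)
    have e := hsmall 1 3 (by norm_num) (by omega)
    have g := hsmall 2 3 (by norm_num) (by omega)
    omega
  subst hp5'
  have a := hsmall 0 1 (by norm_num) (by omega)
  have b := hsmall 0 2 (by norm_num) (by omega)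
  have c := hsmall 1 2 (by norm_num) (by omega)
  have hinj : Function.Injective (fun i : Fin 3 => f (i : ℕ)) := by
    intro i j hij
    fin_cases i <;> fin_cases j <;> simp at hij a b c ⊢ <;> omega
  let σ : Equiv.Perm (Fin 3) := Equiv.ofBijective _ (Finite.injective_iff_bijective.1 hinj)
  have hσ : ∀ i : Fin 3, σ i = f (i : ℕ) := fun i => rfl
  have g0 := hf 0
  have g1 := hf 1
  have g2 := hf 2
  refine IsListedTriple.of_perm σ (isListedTriple_of_mod_five (n := fun j => n (σ j)) hn
    (fun j => hre _) (fun j => hre' _) ?_ ?_ ?_ ?_ K u hu ?_)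
  · have := Equiv.sum_comp σ x
    rw [Fin.sum_univ_three, Fin.sum_univ_three] at this
    rw [this, hsum]
  · simpa [hσ] using g0
  · simpa [hσ] using g1
  · simpa [hσ] using g2
  · intro c
    have := hS c
    rw [zpow_natCast] at this
    rw [← this]
    exact Fintype.sum_equiv σ _ _ fun _ => rfl

/-- The case `8 ∣ N`, using the automorphisms `ζ ↦ ζ ^ (1 + s N / 4)`. -/
theorem isListedTriple_of_eight_dvd {ζ : ℂ} {N m : ℕ} {n : Fin 3 → ℤ} {x : Fin 3 → ℝ}
    (φ : Fin 3 → ℚ) (hN : 0 < N) (hζ : IsPrimitiveRoot ζ N)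
    (hexp : ∀ j, ζ ^ (n j) = Complex.exp ((2 * π * φ j : ℝ) * Complex.I))
    (hn : ∀ a : ℤ, ‖ζ ^ a‖ = 1) (hre : ∀ j, (ζ ^ (n j)).re = x j)
    (hre' : ∀ j, (ζ ^ (-n j)).re = x j) (hx : ∀ j, x j ≠ 0) (hsum : x 0 + x 1 + x 2 = 0)
    (hpm : N = 4 * m) (hm : 2 ∣ m) (hmin : ∃ j, ¬ (2 : ℤ) ∣ n j) : IsListedTriple x := by
  have h1 := symSum_one hn hre hsum
  have hconj : ∀ s : ℕ, symSum ζ n (1 + s * m) = 0 := by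
    intro s
    have := symSum_conj hN hζ n h1 (1 + s * m) ?_
    · exact_mod_cast this
    · rw [hpm]
      refine Nat.Coprime.mul_right ?_ (by simp)
      have h2 : ¬ 2 ∣ 1 + s * m := fun h =>
        absurd ((Nat.dvd_add_left (hm.mul_left s)).1 h) (by norm_num)
      have h3 := ((Nat.Prime.coprime_iff_not_dvd Nat.prime_two).2 h2).symm
      exact Nat.Coprime.mul_right h3 h3
  have hS : ∀ c, classSum ζ n 4 c = 0 := by
    intro c
    have := classSum_eq hN hζ hpm n 0 (by norm_num) (fun s _ _ => hconj s) c
    rw [hconj, mul_zero] at this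
    simpa using this
  obtain ⟨j, hj⟩ := hmin
  have h0 := (self_neg_class hre hre' hx hsum 0 (by norm_num) (hS 0)).resolve_left
    fun h => hj (by have := h j; omega)
  have h2 := (self_neg_class hre hre' hx hsum 2 (by norm_num) (hS 2)).resolve_left
    fun h => hj (by have := h j; omega)
  refine isListedTriple_of_classSum_eq_zero (φ 0) (hexp 0) hn hre hre' hx hsum (fun h => ?_) (hS _)
  have := h0 0
  have := h2 0
  omega

/-- The triple `±(1, -1/2, -1/2)` belongs to the one-parameter family with `φ = 0`. -/
theorem isListedTriple_of_half {x : Fin 3 → ℝ} (ε : ℝ) (hε : ε = 1 ∨ ε = -1) (h0 : x 0 = ε)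
    (h1 : x 1 = -ε / 2) (h2 : x 2 = -ε / 2) : IsListedTriple x := by
  have hs : ε * ε = 1 := by rcases hε with rfl | rfl <;> norm_num
  refine ⟨ε, hε, Or.inr ⟨0, ?_⟩⟩
  have c1 : Real.cos (2 * π * (((0 : ℚ) : ℝ) + 1 / 3)) = -1 / 2 := by
    rw [← cos_two_pi_div_three]; congr 1; push_cast; ring
  have c2 : Real.cos (2 * π * (((0 : ℚ) : ℝ) - 1 / 3)) = -1 / 2 := by
    rw [← cos_two_pi_div_three, ← Real.cos_neg]; congr 1; push_cast; ring
  have d : ε * (-ε / 2) = -1 / 2 := by linear_combination (-1 / 2) * hs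
  rw [c1, c2, h0, h1, h2, hs, d]; simp

/-- Denominators dividing `12`: the possible values `±1, ±1/2, ±√3/2` are checked directly. -/
theorem isListedTriple_of_twelve {x : Fin 3 → ℝ} (φ : Fin 3 → ℚ)
    (hxφ : ∀ j, x j = Real.cos (2 * π * φ j)) (a : Fin 3 → ℤ) (ha : ∀ j, φ j * 12 = a j)
    (hx : ∀ j, x j ≠ 0) (hsum : x 0 + x 1 + x 2 = 0) : IsListedTriple x := by
  have hv : ∀ j, x j = 1 ∨ x j = -1 ∨ x j = 1 / 2 ∨ x j = -1 / 2 ∨ x j = √3 / 2 ∨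
      x j = -√3 / 2 := by
    intro j
    -- Here `t = 2π φⱼ`, and `6t` is a multiple of `π`, so that
    -- `cos 6t = 4 C³ - 3 C = ±1` with `C = cos 2t`.
    have h6 : Real.cos (3 * (2 * (2 * π * φ j))) = 4 * (2 * x j ^ 2 - 1) ^ 3
        - 3 * (2 * x j ^ 2 - 1) := by
      rw [Real.cos_three_mul, Real.cos_two_mul, hxφ]
    have haR : (φ j : ℝ) * 12 = a j := by exact_mod_cast ha j
    rw [show 3 * (2 * (2 * π * (φ j : ℝ))) = a j * π by rw [← haR]; ring] at h6
    have h7 := Real.sin_sq_add_cos_sq (a j * π)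
    rw [Real.sin_int_mul_pi, h6] at h7
    have h8 : x j ^ 2 * ((x j ^ 2 - 1) * ((4 * x j ^ 2 - 1) * (4 * x j ^ 2 - 3)) ^ 2) = 0 := by
      linear_combination h7 / 4
    have h3 : √3 ^ 2 = 3 := Real.sq_sqrt (by norm_num)
    have h9 := (mul_eq_zero.1 h8).resolve_left (pow_ne_zero 2 (hx j))
    rcases mul_eq_zero.1 h9 with h | h
    · have : (x j - 1) * (x j + 1) = 0 := by linarith
      rcases mul_eq_zero.1 this with h | h
      · left; linarith
      · right; left; linarith
    rcases mul_eq_zero.1 ((pow_eq_zero_iff two_ne_zero).1 h) with h | h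
    · have : (x j - 1 / 2) * (x j + 1 / 2) = 0 := by linarith
      rcases mul_eq_zero.1 this with h | h
      · right; right; left; linarith
      · right; right; right; left; linarith
    · have : (x j - √3 / 2) * (x j + √3 / 2) = 0 := by linarith
      rcases mul_eq_zero.1 this with h | h
      · right; right; right; right; left; linarith
      · right; right; right; right; right; linarith
  have hl : (1.7 : ℝ) < √3 := by rw [Real.lt_sqrt] <;> norm_num
  have hr : √3 < 1.8 := by rw [Real.sqrt_lt'] <;> norm_num
  have i0 := hx 0
  have i1 := hx 1
  have i2 := hx 2
  have key : ∀ σ : Equiv.Perm (Fin 3), ∀ ε : ℝ, (ε = 1 ∨ ε = -1) → x (σ 0) = ε →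
      x (σ 1) = -ε / 2 → x (σ 2) = -ε / 2 → IsListedTriple x := fun σ ε hε a b c =>
    IsListedTriple.of_perm σ (isListedTriple_of_half ε hε a b c)
  have k0 := key (Equiv.refl _)
  have k1 := key (Equiv.swap 0 1)
  have k2 := key (Equiv.swap 0 2)
  rw [show Equiv.swap (0 : Fin 3) 1 0 = 1 by decide, show Equiv.swap (0 : Fin 3) 1 1 = 0 by decide,
    show Equiv.swap (0 : Fin 3) 1 2 = 2 by decide] at k1
  rw [show Equiv.swap (0 : Fin 3) 2 0 = 2 by decide, show Equiv.swap (0 : Fin 3) 2 1 = 1 by decide,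
    show Equiv.swap (0 : Fin 3) 2 2 = 0 by decide] at k2
  simp only [Equiv.refl_apply] at k0
  rcases hv 0 with h0 | h0 | h0 | h0 | h0 | h0 <;>
  rcases hv 1 with h1 | h1 | h1 | h1 | h1 | h1 <;>
  rcases hv 2 with h2 | h2 | h2 | h2 | h2 | h2 <;>
  -- `√3` lies strictly between `1.7` and `1.8`, so a zero sum forces `±(1, -1/2, -1/2)` up to order
  -- or a pair of opposite values, where the third cosine would vanish.
  first
  | (exfalso; linarith)
  | exact absurd (by linarith) i0
  | exact absurd (by linarith) i1
  | exact absurd (by linarith) i2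
  | exact k0 1 (Or.inl rfl) (by linarith) (by linarith) (by linarith)
  | exact k0 (-1) (Or.inr rfl) (by linarith) (by linarith) (by linarith)
  | exact k1 1 (Or.inl rfl) (by linarith) (by linarith) (by linarith)
  | exact k1 (-1) (Or.inr rfl) (by linarith) (by linarith) (by linarith)
  | exact k2 1 (Or.inl rfl) (by linarith) (by linarith) (by linarith)
  | exact k2 (-1) (Or.inr rfl) (by linarith) (by linarith) (by linarith)

/-- The classification with the angles indexed by `Fin 3`. Only nonvanishing of the single cosines
is needed: as the full sum is zero, a vanishing pair sum would make the third cosine vanish. -/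
theorem isListedTriple_of_cos_sum (φ : Fin 3 → ℚ) (x : Fin 3 → ℝ)
    (hxφ : ∀ j, x j = Real.cos (2 * π * φ j)) (hx : ∀ j, x j ≠ 0)
    (hsum : x 0 + x 1 + x 2 = 0) : IsListedTriple x := by
  classical
  have hex : ∃ N : ℕ, 0 < N ∧ ∃ n : Fin 3 → ℤ, ∀ j, φ j * N = n j := by
    refine ⟨∏ j, (φ j).den, Finset.prod_pos fun j _ => (φ j).den_pos,
      fun j => (φ j).num * ∏ i ∈ Finset.univ.erase j, ((φ i).den : ℤ), fun j => ?_⟩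
    rw [← Finset.mul_prod_erase _ _ (Finset.mem_univ j)]
    push_cast
    rw [← mul_assoc, Rat.mul_den_eq_num]
  -- `N` is the least common denominator.
  obtain ⟨N, ⟨hN, n, hn⟩, hleast⟩ : ∃ N : ℕ, (0 < N ∧ ∃ n : Fin 3 → ℤ, ∀ j, φ j * N = n j) ∧
      ∀ M < N, ¬ (0 < M ∧ ∃ n : Fin 3 → ℤ, ∀ j, φ j * M = n j) :=
    ⟨Nat.find hex, Nat.find_spec hex, fun M hM => Nat.find_min hex hM⟩
  -- A common divisor of `N` and all `n j` would give a smaller common denominator.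
  have hmin : ∀ r : ℕ, 1 < r → r ∣ N → ∃ j, ¬ (r : ℤ) ∣ n j := by
    rintro r hr ⟨m, rfl⟩
    by_contra! h
    choose a ha using h
    have hm : 0 < m := Nat.pos_of_mul_pos_left hN
    refine hleast m (by nlinarith) ⟨hm, a, fun j => ?_⟩
    have hr0 : (r : ℚ) ≠ 0 := by positivity
    apply mul_left_cancel₀ hr0
    have := hn j
    rw [ha j] at this
    push_cast at this
    linarith
  obtain ⟨ζ, hζdef⟩ : ∃ ζ : ℂ, ζ = Complex.exp (2 * π * Complex.I / N) := ⟨_, rfl⟩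
  have hζ : IsPrimitiveRoot ζ N := hζdef ▸ Complex.isPrimitiveRoot_exp N hN.ne'
  have hexp : ∀ j, ζ ^ (n j) = Complex.exp ((2 * π * φ j : ℝ) * Complex.I) := by
    intro j
    rw [hζdef, ← Complex.exp_int_mul]
    congr 1
    have hN' : (N : ℂ) ≠ 0 := by exact_mod_cast hN.ne'
    have : (n j : ℂ) = φ j * N := by exact_mod_cast (hn j).symm
    rw [this]
    push_cast
    field_simp
  have hnorm : ∀ a : ℤ, ‖ζ ^ a‖ = 1 := by
    intro a
    rw [norm_zpow, hζ.norm'_eq_one hN.ne', one_zpow]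
  have hre : ∀ j, (ζ ^ (n j)).re = x j := by
    intro j
    rw [hexp, Complex.exp_ofReal_mul_I_re, hxφ]
  have hre' : ∀ j, (ζ ^ (-n j)).re = x j := by
    intro j
    rw [zpow_neg, Complex.inv_eq_conj (hnorm _), Complex.conj_re, hre]
  by_cases h8 : 8 ∣ N
  · obtain ⟨k, hk⟩ := h8
    exact isListedTriple_of_eight_dvd (m := 2 * k) φ hN hζ hexp hnorm hre hre' hx hsum
      (by omega) ⟨k, rfl⟩ (by exact_mod_cast hmin 2 (by norm_num) (by omega))
  by_cases hodd : ∃ p m : ℕ, p.Prime ∧ N = p * m ∧ p ≠ 2 ∧ (p ∣ m ∨ 5 ≤ p)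
  · obtain ⟨p, m, hp, hpm, hp2, hcase⟩ := hodd
    exact isListedTriple_of_odd_prime φ hN hζ hexp hnorm hre hre' hx hsum hp hpm hp2 hcase
      (hmin p hp.one_lt ⟨m, hpm⟩)
  have h12 : N ∣ 12 := by
    rw [Nat.dvd_iff_prime_pow_dvd_dvd]
    intro p k hp hk
    by_cases hp2 : p = 2
    · subst hp2
      have : k < 3 := by
        by_contra! h
        exact h8 ((pow_dvd_pow 2 h).trans hk)
      interval_cases k <;> norm_num
    rcases Nat.eq_zero_or_pos k with rfl | hk0
    · simp
    obtain ⟨m, hm⟩ := (dvd_pow_self p hk0.ne').trans hk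
    have hno : ¬ (p ∣ m ∨ 5 ≤ p) := fun h => hodd ⟨p, m, hp, hm, hp2, h⟩
    push Not at hno
    have hp3 : p = 3 := by
      have := hp.two_le
      have h4 : p ≠ 4 := by rintro rfl; revert hp; norm_num
      omega
    subst hp3
    have : k < 2 := by
      by_contra! h
      have h9 := (pow_dvd_pow 3 h).trans hk
      rw [hm, pow_two] at h9
      exact hno.1 (Nat.dvd_of_mul_dvd_mul_left (by norm_num) h9)
    interval_cases k
    norm_num
  obtain ⟨l, hl⟩ := h12
  refine isListedTriple_of_twelve φ hxφ (fun j => n j * l) (fun j => ?_) hx hsum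
  push_cast
  rw [← hn j, mul_assoc]
  exact_mod_cast congrArg (fun t : ℕ => φ j * (t : ℚ)) hl

/-- Classification of irreducible rational triples solving
`cos 2πφ₁ + cos 2πφ₂ + cos 2πφ₃ = 0`.  The allowed equivalences (permutations,
`φ ↦ 1 - φ`, and simultaneous `φ ↦ 1/2 - φ`) act on the cosine values exactly by
permutations and a simultaneous sign change, so the conclusion is phrased as an
equality of multisets of cosines up to a common sign `ε`. -/
theorem irreducible_rational_cosine_triples
    (φ₁ φ₂ φ₃ : ℚ)
    (h₁ : 0 ≤ φ₁ ∧ φ₁ < 1) (h₂ : 0 ≤ φ₂ ∧ φ₂ < 1) (h₃ : 0 ≤ φ₃ ∧ φ₃ < 1)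
    (hsum : Real.cos (2 * π * (φ₁ : ℝ)) + Real.cos (2 * π * (φ₂ : ℝ))
      + Real.cos (2 * π * (φ₃ : ℝ)) = 0)
    (hirr1 : Real.cos (2 * π * (φ₁ : ℝ)) ≠ 0)
    (hirr2 : Real.cos (2 * π * (φ₂ : ℝ)) ≠ 0)
    (hirr3 : Real.cos (2 * π * (φ₃ : ℝ)) ≠ 0)
    (hirr12 : Real.cos (2 * π * (φ₁ : ℝ)) + Real.cos (2 * π * (φ₂ : ℝ)) ≠ 0)
    (hirr13 : Real.cos (2 * π * (φ₁ : ℝ)) + Real.cos (2 * π * (φ₃ : ℝ)) ≠ 0)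
    (hirr23 : Real.cos (2 * π * (φ₂ : ℝ)) + Real.cos (2 * π * (φ₃ : ℝ)) ≠ 0) :
    ∃ ε : ℝ, (ε = 1 ∨ ε = -1) ∧
      ((({ε * Real.cos (2 * π * (φ₁ : ℝ)), ε * Real.cos (2 * π * (φ₂ : ℝ)),
          ε * Real.cos (2 * π * (φ₃ : ℝ))} : Multiset ℝ)
          = ({Real.cos (2 * π * (1 / 10 : ℝ)), Real.cos (2 * π * (3 / 10 : ℝ)),
              Real.cos (2 * π * (1 / 3 : ℝ))} : Multiset ℝ)) ∨
        ∃ φ : ℚ,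
          (({ε * Real.cos (2 * π * (φ₁ : ℝ)), ε * Real.cos (2 * π * (φ₂ : ℝ)),
            ε * Real.cos (2 * π * (φ₃ : ℝ))} : Multiset ℝ)
            = ({Real.cos (2 * π * (φ : ℝ)), Real.cos (2 * π * ((φ : ℝ) + 1 / 3)),
                Real.cos (2 * π * ((φ : ℝ) - 1 / 3))} : Multiset ℝ))) := by
  refine isListedTriple_of_cos_sum ![φ₁, φ₂, φ₃] ![Real.cos (2 * π * (φ₁ : ℝ)),
    Real.cos (2 * π * (φ₂ : ℝ)), Real.cos (2 * π * (φ₃ : ℝ))] (fun j => ?_) (fun j => ?_) hsum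
  · fin_cases j <;> rfl
  · fin_cases j
    exacts [hirr1, hirr2, hirr3]
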